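/- Let Γ be a set of path-quantified LTL formulae such that every existential formula ∃ψ ∈ Γ has satisfiable kernel ψ (i.e. some infinite word satisfies ψ). Then every minimal inconsistent subset of Γ contains at most one existential formula. -/

import Mathlib

/-!
If `Δ` contained two distinct existential formulae `∃ψ₁` and `∃ψ₂`, minimality would give models
`W₁` of `Δ \ {∃ψ₁}` and `W₂` of `Δ \ {∃ψ₂}`. The union `W₁ ∪ W₂` is then a model of `Δ`: a
universal formula of `Δ` holds in both parts, hence in the union, and an existential formula of
`Δ` holds in at least one part, whose witness survives in the union. This contradicts the
inconsistency of `Δ`.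
-/

/-- LTL formulae over atomic propositions `AP`:
    `φ ::= p | ¬φ | φ∧φ | Xφ | φUφ`. -/
inductive LTL (AP : Type) : Type
  | atom : AP → LTL AP
  | not  : LTL AP → LTL AP
  | and  : LTL AP → LTL AP → LTL AP
  | next : LTL AP → LTL AP
  | until_ : LTL AP → LTL AP → LTL AP

/-- An infinite word over `AP` is a function `ℕ → 2^AP`. -/
def Word (AP : Type) : Type := ℕ → Set AP

/-- The `i`-th suffix of a word. -/
def Word.suffix {AP : Type} (w : Word AP) (i : ℕ) : Word AP := fun n => w (n + i)

/-- Satisfaction of an LTL formula on an infinite word. -/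
def Sat {AP : Type} : Word AP → LTL AP → Prop
  | w, .atom p     => p ∈ w 0
  | w, .not φ      => ¬ Sat w φ
  | w, .and φ ψ    => Sat w φ ∧ Sat w ψ
  | w, .next φ     => Sat (w.suffix 1) φ
  | w, .until_ φ ψ => ∃ i, Sat (w.suffix i) ψ ∧ ∀ j < i, Sat (w.suffix j) φ

namespace LTL

/-- `φ ∨ ψ := ¬(¬φ ∧ ¬ψ)`. -/
def or {AP : Type} (φ ψ : LTL AP) : LTL AP := LTL.not ((LTL.not φ).and (LTL.not ψ))

/-- `φ ⇒ ψ := ¬(φ ∧ ¬ψ)`. -/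
def imp {AP : Type} (φ ψ : LTL AP) : LTL AP := LTL.not (φ.and (LTL.not ψ))

/-- `φ ⇔ ψ := (φ⇒ψ) ∧ (ψ⇒φ)`. -/
def iff_ {AP : Type} (φ ψ : LTL AP) : LTL AP := (φ.imp ψ).and (ψ.imp φ)

/-- `F φ := true U φ` (using the tautology `¬(φ ∧ ¬φ)` as `true`). -/
def F {AP : Type} (φ : LTL AP) : LTL AP := LTL.until_ (LTL.not (φ.and (LTL.not φ))) φ

/-- `G φ := ¬F¬φ`. -/
def G {AP : Type} (φ : LTL AP) : LTL AP := LTL.not (LTL.F (LTL.not φ))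

end LTL

/-- Path-quantified LTL formulae: `∀φ` or `∃φ` for quantifier-free `φ`. -/
inductive PQLTL (AP : Type) : Type
  | all : LTL AP → PQLTL AP
  | ex  : LTL AP → PQLTL AP

/-- Satisfaction of a path-quantified formula in a model, abstracted as a
    set `W` of infinite words. -/
def PQSat {AP : Type} (W : Set (Word AP)) : PQLTL AP → Prop
  | .all φ => ∀ w ∈ W, Sat w φ
  | .ex φ  => ∃ w ∈ W, Sat w φ

/-- A set `Γ` of path-quantified formulae is consistent if some nonempty set
    of infinite words satisfies all its members. -/
def Consistent {AP : Type} (Γ : Set (PQLTL AP)) : Prop :=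
  ∃ W : Set (Word AP), W.Nonempty ∧ ∀ γ ∈ Γ, PQSat W γ

/-- `φ` is redundant w.r.t. `Γ`: every nonempty model of `Γ` satisfies `φ`. -/
def Redundant {AP : Type} (Γ : Set (PQLTL AP)) (φ : PQLTL AP) : Prop :=
  ∀ W : Set (Word AP), W.Nonempty → (∀ γ ∈ Γ, PQSat W γ) → PQSat W φ

/-- if every existential formula in `Γ` has a satisfiable kernel,
    then every minimal inconsistent subset of `Γ` contains at most one
    existential formula. -/
theorem minimal_inconsistent_at_most_one_existential {AP : Type}
    (Γ : Set (PQLTL AP))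
    (hker : ∀ ψ : LTL AP, PQLTL.ex ψ ∈ Γ → ∃ w : Word AP, Sat w ψ)
    (Δ : Set (PQLTL AP)) (hΔΓ : Δ ⊆ Γ)
    (hincon : ¬ Consistent Δ)
    (hmin : ∀ Δ' : Set (PQLTL AP), Δ' ⊂ Δ → Consistent Δ') :
    ∀ ψ₁ ψ₂ : LTL AP, PQLTL.ex ψ₁ ∈ Δ → PQLTL.ex ψ₂ ∈ Δ → ψ₁ = ψ₂ := by
  intro ψ₁ ψ₂ h₁ h₂
  by_contra hne
  have hdrop : ∀ γ ∈ Δ, Consistent (Δ \ {γ}) := fun γ hγ =>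
    hmin _ (Set.sdiff_singleton_ssubset.mpr hγ)
  obtain ⟨W₁, hW₁, hs₁⟩ := hdrop _ h₁
  obtain ⟨W₂, -, hs₂⟩ := hdrop _ h₂
  refine hincon ⟨W₁ ∪ W₂, hW₁.mono Set.subset_union_left, ?_⟩
  intro γ hγ
  cases γ with
  | all φ =>
    rintro w (hw | hw)
    · exact hs₁ (.all φ) ⟨hγ, by simp⟩ w hw
    · exact hs₂ (.all φ) ⟨hγ, by simp⟩ w hw
  | ex φ =>
    by_cases h : φ = ψ₁
    · obtain ⟨w, hw, hsat⟩ := hs₂ (.ex φ) ⟨hγ, by simpa [h] using hne⟩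
      exact ⟨w, Or.inr hw, hsat⟩
    · obtain ⟨w, hw, hsat⟩ := hs₁ (.ex φ) ⟨hγ, by simpa using h⟩
      exact ⟨w, Or.inl hw, hsat⟩
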